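/- arXiv:2405.16667 — 2 statements merged into one kernel-verified Lean document; each statement's English description precedes it below -/
import Mathlib

section
/- There exist positive constants ε₀ and C such that if ε ∈ (0,ε₀), φ ∈ C²(S) ∩ C(S̄) and g ∈ C(S) satisfy -ε⁴Δφ + w₁²φ = g in S and φ = 0 on ∂S, then ‖φ‖_{L∞(S)} ≤ C ε^{-2} ‖g‖_{L∞(S)}. -/
open Metric Set Filter Topology

noncomputable section

/-- The Euclidean Laplacian of a real-valued function. -/
def lap {N : ℕ} (f : EuclideanSpace ℝ (Fin N) → ℝ) (x : EuclideanSpace ℝ (Fin N)) : ℝ :=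
  ∑ i : Fin N, iteratedFDeriv ℝ 2 f x (fun _ => EuclideanSpace.single i 1)

section Helpers
variable {N : ℕ}
local notation "X" => EuclideanSpace ℝ (Fin N)


theorem aux_alg (ε θ C1 C2 c s A k v w K T M L R P Q D : ℝ)
   (hε : 0 < ε) (hε1 : ε ≤ 1) (hA : 1 ≤ A) (hθ2 : 2 ≤ θ) (hC1 : 0 ≤ C1) (hc : 0 ≤ c)
   (hθ : c + C1 + ((s^2+C1)/2+C2)^2/2 ≤ θ) (hθA : θ * s^2 ≤ A^2/2) (hk : 0 < k) (hv : 0 ≤ v)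
   (hw : 0 ≤ w) (hT : 0 ≤ T)
   (hM : -(ε^4*T/2 + ε^2*(s/A)^2*v^2/2) ≤ ε^4*(v*M))
   (hL : w^2*v - K ≤ ε^4 * L)
   (hR : -((s^2+C1)/2) ≤ ε * R) (hD : -C2 ≤ D) (hC2 : 0 ≤ C2)
   (hP : 1 ≤ P + c * w^2)
   (hQ : -(ε^4*T + w^2*v^2*C1) ≤ ε^2*(2*w*v*Q)) :
   k * ((1/4)*ε^2*v^2 - θ*K*v) ≤
     k*(θ*ε^4*(v*M + T + v*L) + ε^2*(w*v^2*R + v^2*P+2*w*v*Q+w*v^2*D)) := by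
  apply mul_le_mul_of_nonneg_left _ hk.le
  obtain ⟨C3, hC3⟩ : ∃ C3, C3 = (s^2+C1)/2+C2 := ⟨_, rfl⟩
  rw [← hC3] at hθ
  have hθ0 : 0 ≤ θ := by linarith
  have e2 : ε^2 ≤ 1 := by nlinarith
  have h1 : θ * -(ε^4*T/2 + ε^2*(s/A)^2*v^2/2) ≤ θ * (ε^4*(v*M)) :=
    mul_le_mul_of_nonneg_left hM hθ0
  have h2 : θ * (v * (w^2*v - K)) ≤ θ * (v * (ε^4 * L)) := by gcongr
  have hRD : -C3 ≤ ε * (R + D) := by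
    have : -C2 ≤ ε * D := by nlinarith
    rw [mul_add]; linarith
  have h3 : ε * w * v^2 * (-C3) ≤ ε * w * v^2 * (ε * (R+D)) := by gcongr
  have h3' : -(ε^2*v^2/2 + C3^2*w^2*v^2/2) ≤ ε * w * v^2 * (-C3) := by
    nlinarith [sq_nonneg (ε * v - C3 * w * v)]
  have h4 : ε^2*v^2 * 1 ≤ ε^2*v^2*(P + c*w^2) := by gcongr
  have h5 : ε^2*v^2*(c*w^2) ≤ 1 * v^2*(c*w^2) := by gcongr
  have h6 : θ * (s/A)^2 ≤ 1/2 := by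
    rw [div_pow, ← mul_div_assoc, div_le_iff₀ (by positivity)]; linarith
  have h7 : θ * (s/A)^2 * (ε^2*v^2) ≤ 1/2 * (ε^2*v^2) := by gcongr
  have h8 : (c + C1 + C3^2/2) * (w^2*v^2) ≤ θ * (w^2*v^2) := by gcongr
  have h9 : 2 * (ε^4*T) ≤ θ * (ε^4*T) := by gcongr
  linarith


theorem int_fderiv_zero (F : EuclideanSpace ℝ (Fin N) → ℝ) (hF : ContDiff ℝ 1 F)
    (hc : HasCompactSupport F) (e : EuclideanSpace ℝ (Fin N)) :
    MeasureTheory.Integrable (fun x => fderiv ℝ F x e) ∧ ∫ x, fderiv ℝ F x e = 0 := by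
  have hi : MeasureTheory.Integrable (fun x => fderiv ℝ F x e) := by
    apply Continuous.integrable_of_hasCompactSupport
    · exact (hF.continuous_fderiv (by norm_num)).clm_apply continuous_const
    · exact (hc.fderiv_apply (𝕜 := ℝ) e)
  refine ⟨hi, ?_⟩
  have := integral_mul_fderiv_eq_neg_fderiv_mul_of_integrable (𝕜 := ℝ) (μ := MeasureTheory.volume)
    (f := fun _ : X => (1:ℝ)) (g := F) (v := e) (by simp) (by simpa using hi)
    (by simpa using hF.continuous.integrable_of_hasCompactSupport hc)
    (by intros; fun_prop) (fun x _ => (hF.differentiable (by norm_num)) x)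
  simpa using this

theorem coreB {S : Set (EuclideanSpace ℝ (Fin N))} (hSo : IsOpen S)
    (w : EuclideanSpace ℝ (Fin N) → ℝ) (hw : ContDiffOn ℝ 1 w S) (hw0 : ∀ x ∈ S, 0 ≤ w x)
    (E : EuclideanSpace ℝ (Fin N) → EuclideanSpace ℝ (Fin N)) (hE : ContDiff ℝ 1 E)
    (C1 C2 c s A θ ε K : ℝ) (hC1 : 0 ≤ C1) (hC2 : 0 ≤ C2) (hc : 0 ≤ c)
    (hE1 : ∀ x, ∑ i, (E x i)^2 ≤ C1)
    (hE2 : ∀ x, |∑ i, fderiv ℝ (fun y => E y i) x (EuclideanSpace.single i 1)| ≤ C2)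
    (hP : ∀ x ∈ S, 1 ≤ ∑ i, fderiv ℝ w x (EuclideanSpace.single i 1) * E x i + c * (w x)^2)
    (hε : 0 < ε) (hε1 : ε ≤ 1) (hA : 1 ≤ A) (hθ2 : 2 ≤ θ)
    (hθ : c + C1 + ((s^2+C1)/2+C2)^2/2 ≤ θ) (hθA : θ * s^2 ≤ A^2/2)
    (k : EuclideanSpace ℝ (Fin N) → ℝ) (hk : ContDiff ℝ 1 k) (hk0 : ∀ x, 0 < k x)
    (hkd : ∀ x, ∑ i, (fderiv ℝ k x (EuclideanSpace.single i 1))^2 ≤ (s/(A*ε))^2 * (k x)^2)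
    (v : EuclideanSpace ℝ (Fin N) → ℝ) (hv : ContDiff ℝ 2 v) (hvc : HasCompactSupport v)
    (hvS : tsupport v ⊆ S) (hv0 : ∀ x, 0 ≤ v x)
    (hL : ∀ x ∈ S, (w x)^2 * v x - K ≤ ε^4 *
      ∑ i, fderiv ℝ (fun y => fderiv ℝ v y (EuclideanSpace.single i 1)) x
        (EuclideanSpace.single i 1)) :
    ∫ x, k x * ((1/4)*ε^2*(v x)^2 - θ*K*v x) ≤ 0 := by
  have hv1 : ContDiff ℝ 1 v := hv.of_le (by norm_num)
  have hDv : ∀ i : Fin N, ContDiff ℝ 1 (fun y => fderiv ℝ v y (EuclideanSpace.single i 1)) := by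
    intro i
    have : ContDiff ℝ 1 (fderiv ℝ v) := hv.fderiv_right (by norm_num)
    exact this.clm_apply contDiff_const
  have hEi : ∀ i : Fin N, ContDiff ℝ 1 (fun y => E y i) := by
    intro i
    exact contDiff_euclidean.1 hE i
  have hq : ContDiff ℝ 1 (fun x => w x * (v x)^2) := by
    rw [contDiff_iff_contDiffAt]
    intro x
    by_cases hx : x ∈ tsupport v
    · exact ((hw x (hvS hx)).contDiffAt (hSo.mem_nhds (hvS hx))).mul (hv1.contDiffAt.pow 2)
    · have : (fun x => w x * (v x)^2) =ᶠ[𝓝 x] fun _ => 0 := by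
        filter_upwards [notMem_tsupport_iff_eventuallyEq.1 hx] with y hy
        simp [hy]
      exact contDiffAt_const.congr_of_eventuallyEq this
  set F : Fin N → EuclideanSpace ℝ (Fin N) → ℝ := fun i x =>
    θ * ε^4 * (k x * (v x * fderiv ℝ v x (EuclideanSpace.single i 1)))
      + ε^2 * (k x * ((w x * (v x)^2) * E x i)) with hF
  have hFc : ∀ i, ContDiff ℝ 1 (F i) := by
    intro i
    exact (contDiff_const.mul (hk.mul (hv1.mul (hDv i)))).add
      (contDiff_const.mul (hk.mul (hq.mul (hEi i))))
  have hFs : ∀ i, HasCompactSupport (F i) := by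
    intro i
    apply hvc.mono
    intro x hx
    contrapose! hx
    simp at hx
    simp [hF, hx]
  have hint : ∫ x, ∑ i, fderiv ℝ (F i) x (EuclideanSpace.single i 1) = 0 := by
    rw [MeasureTheory.integral_finsetSum]
    · exact Finset.sum_eq_zero fun i _ => (int_fderiv_zero _ (hFc i) (hFs i) _).2
    · intro i _
      exact (int_fderiv_zero _ (hFc i) (hFs i) _).1
  rw [← hint]
  apply MeasureTheory.integral_mono
  · apply Continuous.integrable_of_hasCompactSupport
    · have := hk.continuous
      have := hv.continuous
      fun_prop
    · apply hvc.mono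
      intro x hx
      contrapose! hx
      simp at hx
      simp [hx]
  · apply MeasureTheory.integrable_finsetSum
    intro i _
    exact (int_fderiv_zero _ (hFc i) (hFs i) _).1
  intro x
  by_cases hx : x ∈ tsupport v
  swap
  · have h0 : ∀ i, F i =ᶠ[𝓝 x] fun _ => 0 := by
      intro i
      filter_upwards [notMem_tsupport_iff_eventuallyEq.1 hx] with y hy
      simp [hF, hy]
    have hvx : v x = 0 := image_eq_zero_of_notMem_tsupport hx
    simp [hvx, (h0 _).fderiv_eq]
  have hxS := hvS hx
  have hwx : DifferentiableAt ℝ w x :=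
    ((hw x hxS).contDiffAt (hSo.mem_nhds hxS)).differentiableAt (by norm_num)
  have hkx : DifferentiableAt ℝ k x := hk.differentiable (by norm_num) x
  have hvx : DifferentiableAt ℝ v x := hv.differentiable (by norm_num) x
  set a : Fin N → ℝ := fun i => fderiv ℝ v x (EuclideanSpace.single i 1) with ha
  set m : Fin N → ℝ := fun i => fderiv ℝ k x (EuclideanSpace.single i 1) / k x with hm
  set d2 : Fin N → ℝ := fun i => fderiv ℝ (fun y => fderiv ℝ v y (EuclideanSpace.single i 1)) x
        (EuclideanSpace.single i 1) with hd2
  set dE : Fin N → ℝ := fun i => fderiv ℝ (fun y => E y i) x (EuclideanSpace.single i 1) with hdE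
  set dw : Fin N → ℝ := fun i => fderiv ℝ w x (EuclideanSpace.single i 1) with hdw
  have hkne := (hk0 x).ne'
  have key : ∀ i, fderiv ℝ (F i) x (EuclideanSpace.single i 1) =
      k x * (θ * ε^4 * (v x * (m i * a i) + (a i)^2 + v x * d2 i) + ε^2 *
        (w x * (v x)^2 * (m i * E x i) + (v x)^2 * (dw i * E x i) + 2 * w x * v x * (a i * E x i)
          + w x * (v x)^2 * dE i)) := by
    intro i
    have h1 := hkx.hasFDerivAt
    have h2 := hvx.hasFDerivAt
    have h3 := ((hDv i).differentiable (by norm_num) x).hasFDerivAt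
    have h4 := ((hEi i).differentiable (by norm_num) x).hasFDerivAt
    have h5 := hwx.hasFDerivAt
    have h6 := (((h1.mul (h2.mul h3)).const_mul (θ*ε^4)).add
      ((h1.mul ((h5.mul (h2.pow 2)).mul h4)).const_mul (ε^2)))
    have h7 : HasFDerivAt (F i) _ x := h6
    rw [h7.fderiv]
    have hmi : fderiv ℝ k x (EuclideanSpace.single i 1) = m i * k x := by
      simp only [hm]; field_simp
    simp
    rw [hmi]
    change _ = _
    simp only [ha, hd2, hdE, hdw]
    ring
  simp only [key]
  have sums : ∑ i, k x * (θ * ε^4 * (v x * (m i * a i) + (a i)^2 + v x * d2 i) + ε^2 *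
        (w x * (v x)^2 * (m i * E x i) + (v x)^2 * (dw i * E x i) + 2 * w x * v x * (a i * E x i)
          + w x * (v x)^2 * dE i)) =
     k x * (θ * ε^4 * (v x * (∑ i, m i * a i) + (∑ i, (a i)^2) + v x * ∑ i, d2 i) + ε^2 *
        (w x * (v x)^2 * (∑ i, m i * E x i) + (v x)^2 * (∑ i, dw i * E x i)
          + 2 * w x * v x * (∑ i, a i * E x i)
          + w x * (v x)^2 * ∑ i, dE i)) := by
    simp only [← Finset.mul_sum, Finset.sum_add_distrib]
  rw [sums]
  have hm2 : ∑ i, (m i)^2 ≤ (s/(A*ε))^2 := by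
    have := hkd x
    simp only [hm, div_pow]
    rw [← Finset.sum_div, div_le_iff₀ (by have := hk0 x; positivity), ← div_pow]
    exact this
  apply aux_alg ε θ C1 C2 c s A (k x) (v x) (w x) K _ _ _ _ _ _ _ hε hε1 hA hθ2 hC1 hc hθ hθA
    (hk0 x) (hv0 x) (hw0 x hxS)
  · positivity
  · have h1 : ∀ i, -(ε^4 * (a i)^2/2 + ε^4*(v x)^2/2 * (m i)^2) ≤ ε^4 * (v x * (m i * a i)) := by
      intro i
      have : 0 ≤ ε^4 := by positivity
      nlinarith [mul_nonneg this (sq_nonneg (a i + v x * m i))]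
    have h2 := Finset.sum_le_sum (s := Finset.univ) fun i _ => h1 i
    rw [Finset.sum_neg_distrib, Finset.sum_add_distrib] at h2
    simp only [← Finset.mul_sum, ← Finset.sum_div] at h2
    refine le_trans ?_ h2
    have h3 : ε^4*(v x)^2/2 * ∑ i, (m i)^2 ≤ ε^4*(v x)^2/2 * (s/(A*ε))^2 := by gcongr
    have h4 : ε^4*(v x)^2/2 * (s/(A*ε))^2 = ε^2*(s/A)^2*(v x)^2/2 := by field_simp
    linarith
  · exact hL x hxS
  · have h1 : ∀ i, -(ε^2 * (m i)^2/2 + (E x i)^2/2) ≤ ε * (m i * E x i) := by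
      intro i
      nlinarith [sq_nonneg (ε * m i + E x i)]
    have h2 := Finset.sum_le_sum (s := Finset.univ) fun i _ => h1 i
    rw [Finset.sum_neg_distrib, Finset.sum_add_distrib] at h2
    simp only [← Finset.mul_sum, ← Finset.sum_div] at h2
    refine le_trans ?_ h2
    have h3 : ε^2 * ∑ i, (m i)^2 ≤ ε^2 * (s/(A*ε))^2 := by gcongr
    have h4 : ε^2 * (s/(A*ε))^2 = s^2/A^2 := by field_simp
    have h5 : s^2/A^2 ≤ s^2 := div_le_self (by positivity) (by nlinarith)
    have := hE1 x
    linarith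
  · exact (abs_le.1 (hE2 x)).1
  · exact hC2
  · exact hP x hxS
  · have h1 : ∀ i, -(ε^4 * (a i)^2 + (w x)^2*(v x)^2 * (E x i)^2) ≤
        ε^2 * (2 * w x * v x * (a i * E x i)) := by
      intro i
      nlinarith [sq_nonneg (ε^2 * a i + w x * v x * E x i)]
    have h2 := Finset.sum_le_sum (s := Finset.univ) fun i _ => h1 i
    rw [Finset.sum_neg_distrib, Finset.sum_add_distrib] at h2
    simp only [← Finset.mul_sum] at h2
    refine le_trans ?_ h2
    have h3 : (w x)^2*(v x)^2 * ∑ i, (E x i)^2 ≤ (w x)^2*(v x)^2 * C1 := by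
      have := hE1 x
      gcongr
    linarith


def JJ (N n : ℕ) (y : EuclideanSpace ℝ (Fin N)) : ℝ := ((1 + ‖y‖^2)^n)⁻¹

theorem JJ_pos (n : ℕ) (y : EuclideanSpace ℝ (Fin N)) : 0 < JJ N n y := by
  unfold JJ; positivity

theorem JJ_contDiff (n : ℕ) : ContDiff ℝ 1 (JJ N n) := by
  unfold JJ
  apply ContDiff.inv
  · exact ((contDiff_const.add (contDiff_norm_sq ℝ)).pow n)
  · intro y; positivity

theorem JJ_fderiv (n : ℕ) (y : EuclideanSpace ℝ (Fin N)) (i : Fin N) :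
    fderiv ℝ (JJ N n) y (EuclideanSpace.single i 1) = -2 * n * y i * JJ N (n+1) y := by
  have h1 : HasFDerivAt (fun y : X => 1 + ‖y‖^2) (2 • innerSL ℝ y) y :=
    (hasStrictFDerivAt_norm_sq y).hasFDerivAt.const_add 1
  have h2 := h1.pow n
  have hne : (1 + ‖y‖^2)^n ≠ 0 := by positivity
  have h3 : HasFDerivAt (JJ N n) _ y := (hasDerivAt_inv hne).comp_hasFDerivAt y h2
  rw [h3.fderiv]
  have hp : (1 + ‖y‖^2) ≠ 0 := by positivity
  have e1 : inner ℝ y (EuclideanSpace.single i (1:ℝ)) = y i := by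
    simp [EuclideanSpace.inner_single_right]
  simp [JJ, e1]
  rcases n with _ | n
  · simp
  · simp only [Nat.add_sub_cancel]
    field_simp
    ring

theorem JJ_integrable (n : ℕ) (hn : N < 2 * n) : MeasureTheory.Integrable (JJ N n) := by
  have := integrable_rpow_neg_one_add_norm_sq (E := X) (μ := MeasureTheory.volume) (r := ((2 * n : ℕ) : ℝ))
    (by simp only [finrank_euclideanSpace, Fintype.card_fin]; exact_mod_cast hn)
  refine this.congr (Eventually.of_forall fun y => ?_)
  simp only [JJ]
  have : (-((2 * n : ℕ):ℝ)/2) = -(n:ℝ) := by push_cast; ring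
  rw [this, Real.rpow_neg (by positivity), Real.rpow_natCast]

theorem JJ_norm_le (n : ℕ) (y : EuclideanSpace ℝ (Fin N)) : ‖y‖ * JJ N (n+1) y ≤ JJ N n y := by
  unfold JJ
  have : (0:ℝ) < 1 + ‖y‖^2 := by positivity
  rw [pow_succ, mul_inv, ← mul_assoc, mul_comm ‖y‖, mul_assoc]
  apply mul_le_of_le_one_right (by positivity)
  rw [← div_eq_mul_inv, div_le_one this]
  nlinarith [sq_nonneg (‖y‖ - 1)]

/-- gradient bound for the rescaled kernel -/
theorem JJ_grad (n : ℕ) (x0 : EuclideanSpace ℝ (Fin N)) (ρ : ℝ) (hρ : 0 < ρ)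
    (x : EuclideanSpace ℝ (Fin N)) :
    ∑ i, (fderiv ℝ (fun x => JJ N n (ρ⁻¹ • (x - x0))) x (EuclideanSpace.single i 1))^2
      ≤ (n / ρ)^2 * (JJ N n (ρ⁻¹ • (x - x0)))^2 := by
  set y := ρ⁻¹ • (x - x0) with hy
  have h : ∀ i, fderiv ℝ (fun x => JJ N n (ρ⁻¹ • (x - x0))) x (EuclideanSpace.single i 1)
      = ρ⁻¹ * (-2 * n * y i * JJ N (n+1) y) := by
    intro i
    have h1 : HasFDerivAt (fun x : X => ρ⁻¹ • (x - x0)) (ρ⁻¹ • ContinuousLinearMap.id ℝ X) x :=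
      ((hasFDerivAt_id x).sub_const x0).const_smul ρ⁻¹
    have h2 := ((JJ_contDiff (N := N) n).differentiable (by norm_num) y).hasFDerivAt.comp x h1
    have h3 : HasFDerivAt (fun x => JJ N n (ρ⁻¹ • (x - x0))) _ x := h2
    rw [h3.fderiv, ← JJ_fderiv]
    simp
  simp only [h]
  have h4 : ∑ i, (ρ⁻¹ * (-2 * n * y i * JJ N (n+1) y))^2 =
      (n/ρ)^2 * (JJ N (n+1) y)^2 * 4 * ‖y‖^2 := by
    rw [EuclideanSpace.norm_sq_eq, Finset.mul_sum]
    apply Finset.sum_congr rfl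
    intro i _
    simp
    field_simp
    ring
  rw [h4, mul_assoc, mul_assoc]
  apply mul_le_mul_of_nonneg_left _ (by positivity)
  have h5 : JJ N n y = JJ N (n+1) y * (1 + ‖y‖^2) := by
    unfold JJ; field_simp; ring
  rw [h5, mul_pow]
  apply mul_le_mul_of_nonneg_left _ (by positivity)
  nlinarith [sq_nonneg (‖y‖^2 - 1)]

theorem meanC (x0 : EuclideanSpace ℝ (Fin N)) (ρ Λ : ℝ) (hρ : 0 < ρ)
    (v : EuclideanSpace ℝ (Fin N) → ℝ) (hv : ContDiff ℝ 2 v) (hvc : HasCompactSupport v)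
    (hL : ∀ x, -Λ ≤
      ∑ i, fderiv ℝ (fun y => fderiv ℝ v y (EuclideanSpace.single i 1)) x
        (EuclideanSpace.single i 1)) :
    v x0 * ∫ y, JJ N (N+2) y ≤ (∫ y, JJ N (N+2) y * v (x0 + ρ • y)) +
      ρ^2/2 * Λ * ∫ y, JJ N (N+1) y / (2 * (N+1)) := by
  have hJ1 := JJ_integrable (N := N) (N+1) (by omega)
  have hJ2 := JJ_integrable (N := N) (N+2) (by omega)
  have cJ1 := (JJ_contDiff (N := N) (N+1)).continuous
  have cJ2 := (JJ_contDiff (N := N) (N+2)).continuous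
  have cv := hv.continuous
  have cdv : Continuous (fderiv ℝ v) := hv.continuous_fderiv (by norm_num)
  obtain ⟨V, hV⟩ := cv.bounded_above_of_compact_support hvc
  obtain ⟨V', hV'⟩ := cdv.bounded_above_of_compact_support (hvc.fderiv (𝕜 := ℝ))
  have hV'0 : 0 ≤ V' := le_trans (norm_nonneg _) (hV' 0)
  set Iκ := ∫ y, JJ N (N+1) y / (2 * (N+1)) with hIκ
  have hder : ∀ t : ℝ, HasDerivAt (fun t : ℝ => ∫ y, JJ N (N+2) y * v (x0 + t • y))
      (∫ y, JJ N (N+2) y * fderiv ℝ v (x0 + t • y) y) t := by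
    intro t
    refine (hasDerivAt_integral_of_dominated_loc_of_deriv_le
      (F := fun t y => JJ N (N+2) y * v (x0 + t • y))
      (F' := fun t y => JJ N (N+2) y * fderiv ℝ v (x0 + t • y) y)
      (s := univ) (bound := fun y => V' * JJ N (N+1) y) univ_mem ?_ ?_ ?_ ?_ ?_ ?_).2
    · filter_upwards with s
      exact (by fun_prop : Continuous fun y => JJ N (N+2) y * v (x0 + s • y)).aestronglyMeasurable
    · apply (hJ2.mul_const V).mono' 
        (by fun_prop : Continuous fun y => JJ N (N+2) y * v (x0 + t • y)).aestronglyMeasurable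
      filter_upwards with y
      rw [norm_mul, Real.norm_of_nonneg (JJ_pos _ _).le]
      exact mul_le_mul_of_nonneg_left (hV _) (JJ_pos _ _).le
    · have : Continuous fun y => JJ N (N+2) y * fderiv ℝ v (x0 + t • y) y := by
        refine cJ2.mul (Continuous.clm_apply ?_ continuous_id)
        exact cdv.comp (by fun_prop)
      exact this.aestronglyMeasurable
    · filter_upwards with y s _
      rw [norm_mul, Real.norm_of_nonneg (JJ_pos _ _).le]
      calc JJ N (N+2) y * ‖fderiv ℝ v (x0 + s • y) y‖
          ≤ JJ N (N+2) y * (V' * ‖y‖) := by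
            apply mul_le_mul_of_nonneg_left _ (JJ_pos _ _).le
            refine (ContinuousLinearMap.le_opNorm _ _).trans ?_
            gcongr
            exact hV' _
        _ = V' * (‖y‖ * JJ N (N+1+1) y) := by ring
        _ ≤ _ := mul_le_mul_of_nonneg_left (JJ_norm_le _ _) hV'0
    · exact hJ1.const_mul V'
    · filter_upwards with y s _
      apply HasDerivAt.const_mul
      have h1 : HasDerivAt (fun s : ℝ => x0 + s • y) y s := by
        simpa using ((hasDerivAt_id s).smul_const y).const_add x0
      exact (hv.differentiable (by norm_num) (x0 + s • y)).hasFDerivAt.comp_hasDerivAt s h1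
  have hDge : ∀ t : ℝ, 0 < t → -(t * Λ * Iκ) ≤ ∫ y, JJ N (N+2) y * fderiv ℝ v (x0 + t • y) y := by
    intro t ht
    set H : Fin N → X → ℝ := fun i y => JJ N (N+1) y / (2 * (N+1)) *
      fderiv ℝ v (x0 + t • y) (EuclideanSpace.single i 1) with hH
    have hDv : ∀ i : Fin N, ContDiff ℝ 1 (fun y => fderiv ℝ v y (EuclideanSpace.single i 1)) := by
      intro i
      have : ContDiff ℝ 1 (fderiv ℝ v) := hv.fderiv_right (by norm_num)
      exact this.clm_apply contDiff_const
    have haff : ContDiff ℝ 1 (fun y : X => x0 + t • y) := by fun_prop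
    have hHc : ∀ i, ContDiff ℝ 1 (H i) := fun i =>
      ((JJ_contDiff (N+1)).div_const _).mul ((hDv i).comp haff)
    have hcomp : ∀ {Z : Type} [Zero Z] (f : X → Z), HasCompactSupport f →
        HasCompactSupport (fun y => f (x0 + t • y)) := by
      intro Z _ f hf
      exact hf.comp_homeomorph ((Homeomorph.smulOfNeZero t ht.ne').trans (Homeomorph.addLeft x0))
    have hHs : ∀ i, HasCompactSupport (H i) := by
      intro i
      exact (hcomp _ (hvc.fderiv_apply (𝕜 := ℝ) (EuclideanSpace.single i 1))).mul_left
    have hz : ∫ y, ∑ i, fderiv ℝ (H i) y (EuclideanSpace.single i 1) = 0 := by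
      rw [MeasureTheory.integral_finsetSum]
      · exact Finset.sum_eq_zero fun i _ => (int_fderiv_zero _ (hHc i) (hHs i) _).2
      · intro i _
        exact (int_fderiv_zero _ (hHc i) (hHs i) _).1
    have hzi : MeasureTheory.Integrable
        (fun y => ∑ i, fderiv ℝ (H i) y (EuclideanSpace.single i 1)) := by
      apply MeasureTheory.integrable_finsetSum
      intro i _
      exact (int_fderiv_zero _ (hHc i) (hHs i) _).1
    have hi2 : MeasureTheory.Integrable (fun y => JJ N (N+2) y * fderiv ℝ v (x0 + t • y) y) := by
      apply Continuous.integrable_of_hasCompactSupport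
      · refine cJ2.mul (Continuous.clm_apply ?_ continuous_id)
        exact cdv.comp (by fun_prop)
      · apply HasCompactSupport.mono (hcomp _ (hvc.fderiv (𝕜 := ℝ)))
        intro y hy
        contrapose! hy
        simp at hy
        simp [hy]
    have e1 : -(t * Λ * Iκ) = ∫ y, -(t * Λ * (JJ N (N+1) y / (2 * (N+1)))) := by
      rw [MeasureTheory.integral_neg, MeasureTheory.integral_const_mul]
    have e2 : ∫ y, JJ N (N+2) y * fderiv ℝ v (x0 + t • y) y =
        ∫ y, (JJ N (N+2) y * fderiv ℝ v (x0 + t • y) y +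
          ∑ i, fderiv ℝ (H i) y (EuclideanSpace.single i 1)) := by
      rw [MeasureTheory.integral_add hi2 hzi, hz, add_zero]
    rw [e1, e2]
    apply MeasureTheory.integral_mono
    · exact ((hJ1.div_const _).const_mul _).neg
    · exact hi2.add hzi
    intro y
    set z := x0 + t • y with hz'
    have hfd : ∀ i, fderiv ℝ (H i) y (EuclideanSpace.single i 1) =
        - (JJ N (N+2) y * (y i * fderiv ℝ v z (EuclideanSpace.single i 1)))
        + t * (JJ N (N+1) y / (2 * (N+1))) *
          fderiv ℝ (fun y => fderiv ℝ v y (EuclideanSpace.single i 1)) z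
            (EuclideanSpace.single i 1) := by
      intro i
      have h1 : HasFDerivAt (fun y : X => x0 + t • y) (t • ContinuousLinearMap.id ℝ X) y :=
        ((hasFDerivAt_id y).const_smul t).const_add x0
      have h2 := ((hDv i).differentiable (by norm_num) z).hasFDerivAt.comp y h1
      have h3 := (((JJ_contDiff (N := N) (N+1)).differentiable (by norm_num) y).hasFDerivAt.mul_const
        ((2 * ((N:ℝ)+1))⁻¹))
      have h4 : HasFDerivAt (H i) _ y := h3.mul h2
      rw [h4.fderiv]
      simp [JJ_fderiv]
      rw [← hz']
      field_simp
      ring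
    have hsum : fderiv ℝ v z y = ∑ i, y i * fderiv ℝ v z (EuclideanSpace.single i 1) := by
      conv_lhs => rw [← (EuclideanSpace.basisFun (Fin N) ℝ).sum_repr y]
      simp
    simp only [hfd, Finset.sum_add_distrib, Finset.sum_neg_distrib, ← Finset.mul_sum, ← hsum]
    have := mul_le_mul_of_nonneg_left (hL z) (show 0 ≤ t * (JJ N (N+1) y / (2 * (N+1))) by
      have := JJ_pos (N+1) y
      positivity)
    linarith
  set G : ℝ → ℝ := fun t => (∫ y, JJ N (N+2) y * v (x0 + t • y)) + t^2/2 * Λ * Iκ with hG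
  have hGd : ∀ t, HasDerivAt G ((∫ y, JJ N (N+2) y * fderiv ℝ v (x0 + t • y) y) + t * Λ * Iκ) t := by
    intro t
    apply (hder t).add
    have : HasDerivAt (fun t : ℝ => t^2/2 * Λ * Iκ) _ t :=
      ((((hasDerivAt_id t).pow 2).div_const 2).mul_const Λ).mul_const Iκ
    have e : t * Λ * Iκ = ((2:ℕ):ℝ) * id t^(2-1) * 1 / 2 * Λ * Iκ := by simp
    rw [e]
    exact this
  have hmono : MonotoneOn G (Icc 0 ρ) := by
    apply monotoneOn_of_deriv_nonneg (convex_Icc _ _)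
    · exact fun t _ => (hGd t).continuousAt.continuousWithinAt
    · exact fun t _ => (hGd t).differentiableAt.differentiableWithinAt
    · intro t ht
      rw [interior_Icc] at ht
      rw [(hGd t).deriv]
      linarith [hDge t ht.1]
  have := hmono (left_mem_Icc.2 hρ.le) (right_mem_Icc.2 hρ.le) hρ.le
  simp only [hG] at this
  simp only [zero_smul, add_zero, MeasureTheory.integral_mul_const] at this
  linarith


theorem scale_int (h : EuclideanSpace ℝ (Fin N) → ℝ) (x0 : EuclideanSpace ℝ (Fin N)) (ρ : ℝ)
    (hρ : 0 < ρ) : ∫ y, h (x0 + ρ • y) = (ρ^N)⁻¹ * ∫ x, h x := by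
  have h1 := MeasureTheory.Measure.integral_comp_smul (MeasureTheory.volume : MeasureTheory.Measure X)
    (fun z => h (x0 + z)) ρ
  rw [h1, MeasureTheory.integral_add_left_eq_self, abs_of_pos (by positivity)]
  simp

theorem coreBC {S : Set (EuclideanSpace ℝ (Fin N))} (hSo : IsOpen S)
    (w : EuclideanSpace ℝ (Fin N) → ℝ) (hw : ContDiffOn ℝ 1 w S) (hw0 : ∀ x ∈ S, 0 ≤ w x)
    (E : EuclideanSpace ℝ (Fin N) → EuclideanSpace ℝ (Fin N)) (hE : ContDiff ℝ 1 E)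
    (C1 C2 c : ℝ) (hC1 : 0 ≤ C1) (hC2 : 0 ≤ C2) (hc : 0 ≤ c)
    (hE1 : ∀ x, ∑ i, (E x i)^2 ≤ C1)
    (hE2 : ∀ x, |∑ i, fderiv ℝ (fun y => E y i) x (EuclideanSpace.single i 1)| ≤ C2)
    (hP : ∀ x ∈ S, 1 ≤ ∑ i, fderiv ℝ w x (EuclideanSpace.single i 1) * E x i + c * (w x)^2) :
    ∃ C' : ℝ, 0 < C' ∧ ∀ ε K : ℝ, 0 < ε → ε ≤ 1 → 0 ≤ K →
    ∀ v : EuclideanSpace ℝ (Fin N) → ℝ, ContDiff ℝ 2 v → HasCompactSupport v →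
    tsupport v ⊆ S → (∀ x, 0 ≤ v x) →
    (∀ x ∈ S, (w x)^2 * v x - K ≤ ε^4 *
      ∑ i, fderiv ℝ (fun y => fderiv ℝ v y (EuclideanSpace.single i 1)) x
        (EuclideanSpace.single i 1)) →
    ∀ x0, v x0 ≤ C' * K / ε^2 := by
  set s : ℝ := ((N+2 : ℕ) : ℝ) with hs
  set θ : ℝ := 2 + (c + C1 + ((s^2+C1)/2+C2)^2/2) with hθ
  have hθ0 : 2 ≤ θ := by
    have : 0 ≤ c + C1 + ((s^2+C1)/2+C2)^2/2 := by positivity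
    linarith
  set A : ℝ := 1 + 2 * θ * s^2 with hA
  have hA1 : 1 ≤ A := by
    have : 0 ≤ 2 * θ * s^2 := by positivity
    linarith
  have hθA : θ * s^2 ≤ A^2/2 := by nlinarith
  set I0 := ∫ y, JJ N (N+2) y with hI0
  set I1 := ∫ y, JJ N (N+1) y / (2 * (N+1)) with hI1
  have hJ2 := JJ_integrable (N := N) (N+2) (by omega)
  have hI0p : 0 < I0 := by
    rw [hI0, MeasureTheory.integral_pos_iff_support_of_nonneg (fun y => (JJ_pos _ y).le) hJ2]
    have : Function.support (JJ N (N+2)) = univ := by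
      ext y; simp [(JJ_pos (N+2) y).ne']
    rw [this]
    exact MeasureTheory.Measure.measure_univ_pos.2 (NeZero.ne _)
  have hI1p : 0 ≤ I1 := MeasureTheory.integral_nonneg fun y => by
    have := JJ_pos (N+1) y
    simp only [Pi.zero_apply]
    positivity
  refine ⟨4 * θ + A^2 * I1 / (2 * I0), by positivity, ?_⟩
  intro ε K hε hε1 hK v hv hvc hvS hv0 hL x0
  have main : ∀ K' : ℝ, K < K' → v x0 ≤ (4 * θ + A^2 * I1 / (2 * I0)) * K' / ε^2 := by
    intro K' hKK
    have hK' : 0 < K' := lt_of_le_of_lt hK hKK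
    have hL' : ∀ x ∈ S, (w x)^2 * v x - K' ≤ ε^4 *
      ∑ i, fderiv ℝ (fun y => fderiv ℝ v y (EuclideanSpace.single i 1)) x
        (EuclideanSpace.single i 1) := fun x hx => by linarith [hL x hx]
    set ρ := A * ε with hρ
    have hρ0 : 0 < ρ := by positivity
    set k : X → ℝ := fun x => JJ N (N+2) (ρ⁻¹ • (x - x0)) with hk
    have hkc : ContDiff ℝ 1 k := (JJ_contDiff (N+2)).comp (by fun_prop)
    have hB := coreB hSo w hw hw0 E hE C1 C2 c s A θ ε K' hC1 hC2 hc hE1 hE2 hP hε hε1 hA1 hθ0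
      (by linarith) hθA k hkc (fun x => JJ_pos _ _) (fun x => JJ_grad (N+2) x0 ρ hρ0 x)
      v hv hvc hvS hv0 hL'
    set H := 4 * θ * K' / ε^2 with hH
    have hHp : 0 < H := by positivity
    have hcomp : ∀ y, k (x0 + ρ • y) = JJ N (N+2) y := by
      intro y
      simp [hk, smul_smul, hρ0.ne']
    have hki : MeasureTheory.Integrable k := by
      have h1 : MeasureTheory.Integrable (fun x => JJ N (N+2) (ρ⁻¹ • x)) :=
        hJ2.comp_smul (by positivity)
      exact h1.comp_sub_right x0
    have hkvi : MeasureTheory.Integrable (fun x => k x * v x) :=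
      (hkc.continuous.mul hv.continuous).integrable_of_hasCompactSupport hvc.mul_left
    have hkv2i : MeasureTheory.Integrable (fun x => k x * (v x)^2) := by
      apply (hkc.continuous.mul (hv.continuous.pow 2)).integrable_of_hasCompactSupport
      apply hvc.mono
      intro x hx
      contrapose! hx
      simp at hx
      simp [hx]
    have h1 : ∫ x, (ε^2/4 * H) * (k x * v x - H * k x) ≤ 0 := by
      refine le_trans (MeasureTheory.integral_mono ((hkvi.sub (hki.const_mul H)).const_mul _) ?_ ?_) hB
      · have : (fun x => k x * ((1/4)*ε^2*(v x)^2 - θ*K'*v x)) =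
          fun x => (1/4)*ε^2 * (k x * (v x)^2) - θ * K' * (k x * v x) := by
          ext x; ring
        rw [this]
        exact (hkv2i.const_mul _).sub (hkvi.const_mul _)
      · intro x
        have e : θ * K' = ε^2/4 * H := by rw [hH]; field_simp
        simp only
        rw [e]
        have : 0 ≤ ε^2/4 * k x := by
          have := JJ_pos (N+2) (ρ⁻¹ • (x - x0))
          positivity
        nlinarith [mul_nonneg this (sq_nonneg (v x - H))]
    rw [MeasureTheory.integral_const_mul, MeasureTheory.integral_sub hkvi (hki.const_mul H),
      MeasureTheory.integral_const_mul] at h1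
    have h2 : ∫ x, k x * v x ≤ H * ∫ x, k x := by
      have : 0 < ε^2/4*H := by positivity
      by_contra hcon
      push Not at hcon
      have := mul_pos this (sub_pos.2 hcon)
      linarith
    have s1 := scale_int k x0 ρ hρ0
    have s2 := scale_int (fun x => k x * v x) x0 ρ hρ0
    simp only [hcomp] at s1 s2
    have h3 : ∫ y, JJ N (N+2) y * v (x0 + ρ • y) ≤ H * I0 := by
      rw [s2, hI0, s1]
      have := mul_le_mul_of_nonneg_left h2 (show 0 ≤ (ρ^N)⁻¹ by positivity)
      linarith
    have h4 := meanC x0 ρ (K'/ε^4) hρ0 v hv hvc (by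
      intro x
      by_cases hx : x ∈ tsupport v
      · have h5 := hL' x (hvS hx)
        have h6 : 0 ≤ (w x)^2 * v x := mul_nonneg (sq_nonneg _) (hv0 x)
        rw [← neg_div, div_le_iff₀ (by positivity)]
        linarith
      · have h0 : ∀ i : Fin N, (fun y => fderiv ℝ v y (EuclideanSpace.single i 1)) =ᶠ[𝓝 x]
            fun _ => 0 := by
          intro i
          have := (notMem_tsupport_iff_eventuallyEq.1 hx).fderiv (𝕜 := ℝ)
          filter_upwards [this] with y hy
          rw [hy]
          change fderiv ℝ (fun _ => (0:ℝ)) y _ = 0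
          simp
        simp [(h0 _).fderiv_eq]
        positivity)
    have h5 : v x0 * I0 ≤ H * I0 + ρ^2/2 * (K'/ε^4) * I1 := by linarith
    have h6 : H * I0 + ρ^2/2 * (K'/ε^4) * I1 = ((4 * θ + A^2 * I1 / (2 * I0)) * K' / ε^2) * I0 := by
      rw [hH, hρ]; field_simp
    rw [h6] at h5
    exact le_of_mul_le_mul_right h5 hI0p
  have ht : Tendsto (fun K' : ℝ => (4 * θ + A^2 * I1 / (2 * I0)) * K' / ε^2) (𝓝[>] K)
      (𝓝 ((4 * θ + A^2 * I1 / (2 * I0)) * K / ε^2)) := by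
    apply tendsto_nhdsWithin_of_tendsto_nhds
    exact (by fun_prop : Continuous fun K' : ℝ => (4 * θ + A^2 * I1 / (2 * I0)) * K' / ε^2).tendsto K
  exact ge_of_tendsto ht (eventually_nhdsWithin_of_forall main)


theorem pp_hasDerivAt (n : ℕ) (t : ℝ) :
    HasDerivAt (fun t : ℝ => (max t 0)^(n+2)) ((n+2) * (max t 0)^(n+1)) t := by
  rcases lt_trichotomy t 0 with h | h | h
  · have : (fun t : ℝ => (max t 0)^(n+2)) =ᶠ[𝓝 t] fun _ => 0 := by
      filter_upwards [Iio_mem_nhds h] with s hs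
      rw [max_eq_right (le_of_lt hs)]; simp
    rw [max_eq_right h.le]
    simpa using (hasDerivAt_const t (0:ℝ)).congr_of_eventuallyEq this
  · subst h
    rw [hasDerivAt_iff_isLittleO]
    simp only [max_self, ne_eq, Nat.add_eq_zero_iff, OfNat.ofNat_ne_zero, and_false, not_false_eq_true,
      zero_pow, sub_zero, one_ne_zero, mul_zero, smul_eq_mul]
    have h1 : (fun t : ℝ => (max t 0)^(n+2)) =O[𝓝 0] fun t : ℝ => t^(n+2) := by
      apply Asymptotics.IsBigO.of_bound 1
      filter_upwards with t
      rw [norm_pow, norm_pow, one_mul]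
      gcongr
      rcases le_total t 0 with h | h
      · simp [h]
      · simp [h]
    exact h1.trans_isLittleO (Asymptotics.isLittleO_pow_id (by omega))
  · have : (fun t : ℝ => (max t 0)^(n+2)) =ᶠ[𝓝 t] fun t => t^(n+2) := by
      filter_upwards [Ioi_mem_nhds h] with s hs
      rw [max_eq_left (le_of_lt hs)]
    rw [max_eq_left h.le]
    simpa using (hasDerivAt_pow (n+2) t).congr_of_eventuallyEq this

theorem pp_contDiff2 : ContDiff ℝ 1 (fun t : ℝ => (max t 0)^2) := by
  rw [contDiff_one_iff_deriv]
  refine ⟨fun t => (pp_hasDerivAt 0 t).differentiableAt, ?_⟩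
  have : deriv (fun t : ℝ => (max t 0)^2) = fun t => 2 * max t 0 := by
    ext t
    have := (pp_hasDerivAt 0 t).deriv
    simpa using this
  rw [this]; fun_prop

theorem pp_contDiff3 : ContDiff ℝ 2 (fun t : ℝ => (max t 0)^3) := by
  have h2 : (2 : WithTop ℕ∞) = 1 + 1 := by norm_num
  rw [h2, contDiff_succ_iff_deriv]
  refine ⟨fun t => (pp_hasDerivAt 1 t).differentiableAt, by simp, ?_⟩
  have : deriv (fun t : ℝ => (max t 0)^3) = fun t => 3 * (max t 0)^2 := by
    ext t
    have := (pp_hasDerivAt 1 t).deriv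
    norm_num at this
    simpa using this
  rw [this]; exact contDiff_const.mul pp_contDiff2

theorem upperD {S : Set (EuclideanSpace ℝ (Fin N))} (hSo : IsOpen S) (hSb : Bornology.IsBounded S)
    (w : EuclideanSpace ℝ (Fin N) → ℝ) (C' : ℝ)
    (hcore : ∀ ε K : ℝ, 0 < ε → ε ≤ 1 → 0 ≤ K →
    ∀ v : EuclideanSpace ℝ (Fin N) → ℝ, ContDiff ℝ 2 v → HasCompactSupport v →
    tsupport v ⊆ S → (∀ x, 0 ≤ v x) →
    (∀ x ∈ S, (w x)^2 * v x - K ≤ ε^4 *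
      ∑ i, fderiv ℝ (fun y => fderiv ℝ v y (EuclideanSpace.single i 1)) x
        (EuclideanSpace.single i 1)) →
    ∀ x0, v x0 ≤ C' * K / ε^2) (hC' : 0 < C')
    (ε Kg : ℝ) (hε : 0 < ε) (hε1 : ε ≤ 1) (hKg : 0 ≤ Kg)
    (φ : EuclideanSpace ℝ (Fin N) → ℝ) (hφ : ContDiffOn ℝ 2 φ S)
    (hφc : ContinuousOn φ (closure S)) (hφ0 : ∀ x ∈ frontier S, φ x = 0)
    (hL : ∀ x ∈ S, (w x)^2 * φ x - Kg ≤ ε^4 *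
      ∑ i, fderiv ℝ (fun y => fderiv ℝ φ y (EuclideanSpace.single i 1)) x
        (EuclideanSpace.single i 1)) :
    ∀ x ∈ S, φ x ≤ 3 * C' * Kg / ε^2 := by
  intro x hx
  have hr : 0 ≤ 3 * C' * Kg / ε^2 := by positivity
  by_cases hpos : φ x ≤ 0
  · linarith
  push Not at hpos
  obtain ⟨xm, hxm, hmax⟩ := hSb.isCompact_closure.exists_isMaxOn ⟨x, subset_closure hx⟩ hφc
  set M := φ xm with hM
  have hmax' : ∀ y ∈ S, φ y ≤ M := fun y hy => hmax (subset_closure hy)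
  have hMpos : 0 < M := lt_of_lt_of_le hpos (hmax' x hx)
  have hfr : ∀ y ∈ closure S, 0 < φ y → y ∈ S := by
    intro y hy hp
    by_contra hn
    have : y ∈ frontier S := by rw [hSo.frontier_eq]; exact ⟨hy, hn⟩
    rw [hφ0 y this] at hp
    exact lt_irrefl _ hp
  have hxmS : xm ∈ S := hfr xm hxm hMpos
  have key : ∀ δ : ℝ, 0 < δ → (max (M - δ) 0)^3 ≤ C' * (3 * M^2 * Kg) / ε^2 := by
    intro δ hδ
    classical
    set v : X → ℝ := fun y => if y ∈ S then (max (φ y - δ) 0)^3 else 0 with hv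
    have hvS : ∀ y ∈ S, v y = (max (φ y - δ) 0)^3 := fun y hy => by simp [hv, hy]
    set T := closure S ∩ φ ⁻¹' (Ici δ) with hT
    have hTc : IsClosed T := hφc.preimage_isClosed_of_isClosed isClosed_closure isClosed_Ici
    have hTS : T ⊆ S := fun y hy => hfr y hy.1 (lt_of_lt_of_le hδ hy.2)
    have hTk : IsCompact T := hSb.isCompact_closure.of_isClosed_subset hTc inter_subset_left
    have hsup : tsupport v ⊆ T := by
      apply closure_minimal _ hTc
      intro y hy
      by_cases hyS : y ∈ S
      · refine ⟨subset_closure hyS, ?_⟩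
        by_contra hlt
        simp only [mem_preimage, mem_Ici, not_le] at hlt
        apply hy
        rw [hvS y hyS, max_eq_right (by linarith)]; simp
      · exact absurd (by simp [hv, hyS]) hy
    have hvcs : HasCompactSupport v := hTk.of_isClosed_subset (isClosed_tsupport v) hsup
    have hev : ∀ y ∈ S, v =ᶠ[𝓝 y] fun y => (max (φ y - δ) 0)^3 := by
      intro y hy
      filter_upwards [hSo.mem_nhds hy] with z hz using hvS z hz
    have hφat : ∀ y ∈ S, ContDiffAt ℝ 2 φ y := fun y hy => (hφ y hy).contDiffAt (hSo.mem_nhds hy)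
    have hvC : ContDiff ℝ 2 v := by
      rw [contDiff_iff_contDiffAt]
      intro y
      by_cases hy : y ∈ S
      · refine ContDiffAt.congr_of_eventuallyEq ?_ (hev y hy)
        exact pp_contDiff3.contDiffAt.comp y ((hφat y hy).sub contDiffAt_const)
      · have : y ∉ tsupport v := fun h => hy (hTS (hsup h))
        exact contDiffAt_const.congr_of_eventuallyEq (notMem_tsupport_iff_eventuallyEq.1 this)
    have hv0 : ∀ y, 0 ≤ v y := by
      intro y
      simp only [hv]; split_ifs <;> positivity
    have hfd : ∀ y ∈ S, ∀ e, fderiv ℝ v y e = 3 * (max (φ y - δ) 0)^2 * fderiv ℝ φ y e := by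
      intro y hy e
      have h1 := ((hφat y hy).differentiableAt (by norm_num)).hasFDerivAt.sub_const δ
      have h2 := (pp_hasDerivAt 1 (φ y - δ)).comp_hasFDerivAt y h1
      have h3 : HasFDerivAt (fun y => (max (φ y - δ) 0)^3) _ y := h2
      rw [(hev y hy).fderiv_eq, h3.fderiv]
      norm_num
    have hfin := hcore ε (3 * M^2 * Kg) hε hε1 (by positivity) v hvC hvcs (hsup.trans hTS) hv0 (by
      intro y hy
      have hd2 : ∀ i : Fin N, fderiv ℝ (fun y => fderiv ℝ v y (EuclideanSpace.single i 1)) y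
          (EuclideanSpace.single i 1) =
          6 * max (φ y - δ) 0 * (fderiv ℝ φ y (EuclideanSpace.single i 1))^2
          + 3 * (max (φ y - δ) 0)^2 * fderiv ℝ (fun y => fderiv ℝ φ y (EuclideanSpace.single i 1)) y
            (EuclideanSpace.single i 1) := by
        intro i
        have hee : (fun y => fderiv ℝ v y (EuclideanSpace.single i 1)) =ᶠ[𝓝 y]
            fun y => 3 * (max (φ y - δ) 0)^2 * fderiv ℝ φ y (EuclideanSpace.single i 1) := by
          filter_upwards [hSo.mem_nhds hy] with z hz using hfd z hz _
        have h1 := ((hφat y hy).differentiableAt (by norm_num)).hasFDerivAt.sub_const δ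
        have h2 := (pp_hasDerivAt 0 (φ y - δ)).comp_hasFDerivAt y h1
        have h4 : ContDiffAt ℝ 1 (fun y => fderiv ℝ φ y (EuclideanSpace.single i 1)) y :=
          ((hφat y hy).fderiv_right (by norm_num)).clm_apply contDiffAt_const
        have h5 := (h4.differentiableAt (by norm_num)).hasFDerivAt
        have h3 : HasFDerivAt (fun y => 3 * (max (φ y - δ) 0)^2 *
          fderiv ℝ φ y (EuclideanSpace.single i 1)) _ y := (h2.const_mul 3).mul h5
        rw [hee.fderiv_eq, h3.fderiv]
        simp
        ring
      simp only [hd2, Finset.sum_add_distrib, ← Finset.mul_sum]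
      rw [hvS y hy]
      set q := max (φ y - δ) 0 with hq
      have hq0 : 0 ≤ q := le_max_right _ _
      have hqM : q ≤ M := max_le (by linarith [hmax' y hy]) hMpos.le
      have h1 := mul_le_mul_of_nonneg_left (hL y hy) (show 0 ≤ 3 * q^2 by positivity)
      have h2 : 0 ≤ ε^4 * (6 * q * ∑ i, (fderiv ℝ φ y (EuclideanSpace.single i 1))^2) := by positivity
      have h3 : q^3 ≤ q^2 * φ y := by
        rcases le_total (φ y - δ) 0 with h | h
        · have : q = 0 := max_eq_right h
          simp [this]
        · have : q = φ y - δ := max_eq_left h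
          have : q ≤ φ y := by linarith
          nlinarith [mul_le_mul_of_nonneg_left this (sq_nonneg q)]
      have h4 : (w y)^2 * q^3 ≤ (w y)^2 * (q^2 * φ y) := by gcongr
      have h4' : 0 ≤ (w y)^2 * q^3 := by positivity
      have h5 : 3 * q^2 * Kg ≤ 3 * M^2 * Kg := by gcongr
      linarith) xm
    rw [hvS xm hxmS] at hfin
    exact hfin
  have hM3 : M^3 ≤ C' * (3 * M^2 * Kg) / ε^2 := by
    have ht : Tendsto (fun δ : ℝ => (max (M - δ) 0)^3) (𝓝[>] 0) (𝓝 ((max (M - 0) 0)^3)) := by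
      apply tendsto_nhdsWithin_of_tendsto_nhds
      exact (by fun_prop : Continuous fun δ : ℝ => (max (M - δ) 0)^3).tendsto 0
    have := le_of_tendsto ht (eventually_nhdsWithin_of_forall key)
    rwa [sub_zero, max_eq_left hMpos.le] at this
  refine (hmax' x hx).trans ?_
  have e : C' * (3 * M^2 * Kg) / ε^2 = M^2 * (3 * C' * Kg / ε^2) := by ring
  rw [e, pow_succ] at hM3
  exact le_of_mul_le_mul_left hM3 (by positivity)


theorem baireA (Ω₁ B : Set (EuclideanSpace ℝ (Fin N))) (hΩ₁ : IsOpen Ω₁)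
    (hBf : B ⊆ frontier Ω₁) (hBcpt : IsCompact B)
    (w : EuclideanSpace ℝ (Fin N) → ℝ) (d₁ : ℝ) (hd₁ : 0 < d₁) (c₀ : ℝ)
    (hHopf : ∀ x ∈ Ω₁, infDist x B < d₁ → c₀ * infDist x B ≤ w x)
    (b : EuclideanSpace ℝ (Fin N)) (hb : b ∈ B) (η : ℝ) (hη : 0 < η) :
    ∃ b' ∈ B, dist b' b < η ∧ ∀ δ > 0, ∃ x ∈ Ω₁, 0 < dist x b' ∧ dist x b' < δ ∧
      c₀ * infDist x B ≤ w x ∧ dist x b' < 2 * infDist x B := by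
  have : CompactSpace B := isCompact_iff_compactSpace.1 hBcpt
  have hBcl : IsClosed B := hBcpt.isClosed
  have hBne : B.Nonempty := ⟨b, hb⟩
  have hnot : ∀ y ∈ B, y ∉ Ω₁ := by
    intro y hy h
    have := hBf hy
    rw [hΩ₁.frontier_eq] at this
    exact this.2 h
  let G : ℕ → Set B := fun j => {b' | ∃ x ∈ Ω₁, infDist x B < d₁ ∧ infDist x B < 1/((j:ℝ)+1) ∧
    dist x b' < 2 * infDist x B}
  have hGo : ∀ j, IsOpen (G j) := by
    intro j
    have : G j = ⋃ x ∈ {x | x ∈ Ω₁ ∧ infDist x B < d₁ ∧ infDist x B < 1/((j:ℝ)+1)},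
        {b' : B | dist x b' < 2 * infDist x B} := by
      ext b'
      simp only [G, mem_ofPred_eq, mem_iUnion, exists_prop, and_assoc]
    rw [this]
    apply isOpen_biUnion
    intro x _
    exact isOpen_lt (by fun_prop) (by fun_prop)
  have hGd : ∀ j, Dense (G j) := by
    intro j
    rw [Metric.dense_iff]
    intro b' r hr
    have hcl : (b' : X) ∈ closure Ω₁ := frontier_subset_closure (hBf b'.2)
    obtain ⟨x, hx, hxd⟩ := Metric.mem_closure_iff.1 hcl (min (r/2) (min d₁ (1/((j:ℝ)+1))))
      (by positivity)
    rw [dist_comm] at hxd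
    obtain ⟨p, hp, hpe⟩ := hBcpt.exists_infDist_eq_dist hBne x
    have h1 : infDist x B ≤ dist x b' := infDist_le_dist_of_mem b'.2
    have hxp : 0 < infDist x B := by
      rw [← hBcl.notMem_iff_infDist_pos hBne]
      exact fun h => hnot x h hx
    simp only [lt_min_iff] at hxd
    refine ⟨⟨p, hp⟩, ?_, x, hx, by linarith, by linarith, ?_⟩
    · rw [mem_ball, Subtype.dist_eq]
      have := dist_triangle p x b'
      rw [dist_comm p x] at this
      simp only
      linarith
    · simp only
      rw [← hpe]; linarith
  have hD := dense_iInter_of_isOpen_nat hGo hGd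
  obtain ⟨b', hb'1, hb'2⟩ := Metric.dense_iff.1 hD ⟨b, hb⟩ η hη
  refine ⟨b', b'.2, by simpa [Subtype.dist_eq] using hb'1, ?_⟩
  intro δ hδ
  obtain ⟨j, hj⟩ := exists_nat_one_div_lt (show 0 < δ/2 by positivity)
  obtain ⟨x, hx, h1, h2, h3⟩ := mem_iInter.1 hb'2 j
  refine ⟨x, hx, ?_, by linarith, hHopf x hx h1, h3⟩
  rw [dist_pos]
  rintro rfl
  exact hnot _ b'.2 hx

theorem localA (Ω₁ B : Set (EuclideanSpace ℝ (Fin N))) (hΩ₁ : IsOpen Ω₁)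
    (hBf : B ⊆ frontier Ω₁) (hBcpt : IsCompact B)
    (w : EuclideanSpace ℝ (Fin N) → ℝ) (d₁ : ℝ) (hd₁ : 0 < d₁) (c₀ : ℝ) (hc₀ : 0 < c₀)
    (hwreg : ContDiffOn ℝ 1 w (closure Ω₁)) (hwB : ∀ x ∈ B, w x = 0)
    (hHopf : ∀ x ∈ Ω₁, infDist x B < d₁ → c₀ * infDist x B ≤ w x)
    (b : EuclideanSpace ℝ (Fin N)) (hb : b ∈ B) :
    ∃ r > 0, ∃ e, ∀ x ∈ Ω₁, dist x b < r → 1 ≤ fderiv ℝ w x e := by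
  have hbc : b ∈ closure Ω₁ := frontier_subset_closure (hBf hb)
  have h1 := hwreg b hbc
  rw [show (1 : WithTop ℕ∞) = 0 + 1 by norm_num,
    contDiffWithinAt_succ_iff_hasFDerivWithinAt (by simp), insert_eq_of_mem hbc] at h1
  obtain ⟨u, hu, -, f', hf', hf'c⟩ := h1
  have hbu : b ∈ u := mem_of_mem_nhdsWithin hbc hu
  obtain ⟨r0, hr0, hr0u⟩ := Metric.mem_nhdsWithin_iff.1 hu
  have hcont : ContinuousWithinAt f' u b := hf'c.continuousWithinAt
  have hne : f' b ≠ 0 := by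
    intro h0
    have h2 : ∀ᶠ y in 𝓝[u] b, ‖f' y‖ < c₀/4 := by
      have := hcont.norm
      have h3 : ‖f' b‖ < c₀/4 := by rw [h0, norm_zero]; positivity
      exact this.eventually (gt_mem_nhds h3)
    obtain ⟨r1, hr1, h3⟩ := Metric.mem_nhdsWithin_iff.1 h2
    obtain ⟨b', hb', hbd, hseq⟩ := baireA Ω₁ B hΩ₁ hBf hBcpt w d₁ hd₁ c₀ hHopf b hb (min r0 r1)
      (by positivity)
    have hb'u : b' ∈ u := hr0u ⟨lt_of_lt_of_le hbd (min_le_left _ _),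
      frontier_subset_closure (hBf hb')⟩
    have h4 : ‖f' b'‖ < c₀/4 := h3 ⟨lt_of_lt_of_le hbd (min_le_right _ _), hb'u⟩
    have h5 := (hasFDerivWithinAt_iff_isLittleO.1 (hf' b' hb'u)).def (show 0 < c₀/4 by positivity)
    obtain ⟨r2, hr2, h6⟩ := Metric.mem_nhdsWithin_iff.1 h5
    have hgap : 0 < r0 - dist b' b := by
      have := lt_of_lt_of_le hbd (min_le_left _ _)
      linarith
    obtain ⟨x, hx, hx0, hxδ, hw1, hw2⟩ := hseq (min r2 (r0 - dist b' b)) (by positivity)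
    rw [lt_min_iff] at hxδ
    have hxu : x ∈ u := by
      refine hr0u ⟨?_, subset_closure hx⟩
      have := dist_triangle x b' b
      rw [mem_ball]
      linarith
    have h7 : ‖w x - w b' - f' b' (x - b')‖ ≤ c₀/4 * ‖x - b'‖ := h6 ⟨hxδ.1, hxu⟩
    rw [hwB b' hb', sub_zero, ← dist_eq_norm x b', Real.norm_eq_abs] at h7
    have h8 : f' b' (x - b') ≤ ‖f' b'‖ * dist x b' := by
      rw [dist_eq_norm]
      exact (le_abs_self _).trans ((f' b').le_opNorm _)
    have h9 := (abs_le.1 h7).2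
    nlinarith
  obtain ⟨e0, he0⟩ : ∃ e0, f' b e0 ≠ 0 := by
    by_contra hcon
    push Not at hcon
    exact hne (ContinuousLinearMap.ext hcon)
  set e := (2 / f' b e0) • e0 with he
  have hbe : f' b e = 2 := by simp [he, he0]
  have hce : ContinuousWithinAt (fun y => f' y e) u b := hcont.clm_apply continuousWithinAt_const
  have h2 : ∀ᶠ y in 𝓝[u] b, 1 < f' y e := by
    apply hce.eventually (lt_mem_nhds _)
    simp only [hbe]; norm_num
  obtain ⟨r1, hr1, h3⟩ := Metric.mem_nhdsWithin_iff.1 h2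
  refine ⟨min r0 r1, by positivity, e, ?_⟩
  intro x hx hxd
  rw [lt_min_iff] at hxd
  have hxu : x ∈ u := hr0u ⟨hxd.1, subset_closure hx⟩
  have hun : u ∈ 𝓝 x := by
    filter_upwards [isOpen_ball.mem_nhds (show x ∈ ball b r0 from hxd.1), hΩ₁.mem_nhds hx]
      with y hy1 hy2 using hr0u ⟨hy1, subset_closure hy2⟩
  rw [((hf' x hxu).hasFDerivAt hun).fderiv]
  exact le_of_lt (h3 ⟨hxd.2, hxu⟩)

theorem globalA (Ω₁ B : Set (EuclideanSpace ℝ (Fin N)))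
    (hBcpt : IsCompact B)
    (w : EuclideanSpace ℝ (Fin N) → ℝ)
    (hloc : ∀ b ∈ B, ∃ r > 0, ∃ e, ∀ x ∈ Ω₁, dist x b < r → 1 ≤ fderiv ℝ w x e) :
    ∃ E : EuclideanSpace ℝ (Fin N) → EuclideanSpace ℝ (Fin N), ContDiff ℝ 1 E ∧
      HasCompactSupport E ∧ (∀ x ∈ Ω₁, 0 ≤ fderiv ℝ w x (E x)) ∧
      ∃ O, IsOpen O ∧ B ⊆ O ∧ ∀ x ∈ Ω₁, x ∈ O → 1 ≤ fderiv ℝ w x (E x) := by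
  refine hBcpt.induction_on (p := fun K => ∃ E : X → X, ContDiff ℝ 1 E ∧
      HasCompactSupport E ∧ (∀ x ∈ Ω₁, 0 ≤ fderiv ℝ w x (E x)) ∧
      ∃ O, IsOpen O ∧ K ⊆ O ∧ ∀ x ∈ Ω₁, x ∈ O → 1 ≤ fderiv ℝ w x (E x)) ?_ ?_ ?_ ?_
  · exact ⟨fun _ => 0, contDiff_const, HasCompactSupport.zero, by simp, ∅, isOpen_empty,
      subset_rfl, by simp⟩
  · rintro s t hst ⟨E, h1, h2, h3, O, h4, h5, h6⟩
    exact ⟨E, h1, h2, h3, O, h4, hst.trans h5, h6⟩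
  · rintro s t ⟨E, h1, h2, h3, O, h4, h5, h6⟩ ⟨E', h1', h2', h3', O', h4', h5', h6'⟩
    refine ⟨E + E', h1.add h1', h2.add h2', ?_, O ∪ O', h4.union h4', union_subset_union h5 h5', ?_⟩
    · intro x hx
      have := h3 x hx
      have := h3' x hx
      simp only [Pi.add_apply, map_add]
      linarith
    · intro x hx hxO
      have a1 := h3 x hx
      have a2 := h3' x hx
      simp only [Pi.add_apply, map_add]
      rcases hxO with h | h
      · linarith [h6 x hx h]
      · linarith [h6' x hx h]
  · intro b hb
    obtain ⟨r, hr, e, he⟩ := hloc b hb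
    let f : ContDiffBump b := ⟨r/2, r, by positivity, by linarith⟩
    refine ⟨ball b (r/2), mem_nhdsWithin_of_mem_nhds (ball_mem_nhds b (by positivity)),
      fun x => f x • e, f.contDiff.smul contDiff_const, f.hasCompactSupport.smul_right, ?_,
      ball b (r/2), isOpen_ball, subset_rfl, ?_⟩
    · intro x hx
      simp only [map_smul, smul_eq_mul]
      by_cases hxr : dist x b < r
      · exact mul_nonneg f.nonneg (by linarith [he x hx hxr])
      · rw [f.zero_of_le_dist (by push Not at hxr; exact hxr)]; simp
    · intro x hx hxb
      simp only
      rw [f.one_of_mem_closedBall (ball_subset_closedBall hxb), one_smul]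
      exact he x hx (by rw [mem_ball] at hxb; linarith)

end Helpers

/-- **Lemma A.1, first assertion.** A-priori estimate
`‖φ‖_{L∞(S)} ≤ C ε⁻² ‖g‖_{L∞(S)}` for the Schrödinger operator `-ε⁴Δ + w₁²`
on the boundary strip `S`. -/
theorem statement_17 {N : ℕ}
    (Ω Ω₁ : Set (EuclideanSpace ℝ (Fin N)))
    (hΩ : IsOpen Ω) (hbdd : Bornology.IsBounded Ω)
    (hΩ₁ : IsOpen Ω₁) (hsub : Ω₁ ⊆ Ω)
    (B : Set (EuclideanSpace ℝ (Fin N)))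
    (hB : B = frontier Ω ∩ frontier Ω₁) (hBne : B.Nonempty) (hBcpt : IsCompact B)
    (w₁ : EuclideanSpace ℝ (Fin N) → ℝ)
    (hw₁reg : ContDiffOn ℝ 1 w₁ (closure Ω₁))
    (hw₁pos : ∀ x ∈ Ω₁, 0 < w₁ x)
    (hw₁bc : ∀ x ∈ B, w₁ x = 0)
    (d₁ : ℝ) (hd₁ : 0 < d₁)
    (S : Set (EuclideanSpace ℝ (Fin N)))
    (hS : S = {x ∈ Ω₁ | Metric.infDist x B < d₁})
    -- `d₁` is small enough that the nearest point projection onto `B` is a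
    -- well-defined smooth map on `S`
    (proj : EuclideanSpace ℝ (Fin N) → EuclideanSpace ℝ (Fin N))
    (hproj : ∀ x ∈ S, proj x ∈ B ∧ dist x (proj x) = Metric.infDist x B)
    (hprojC : ContDiffOn ℝ (⊤ : ℕ∞) proj S)
    (c₀ : ℝ) (hc₀ : 0 < c₀)
    (hHopf : ∀ x ∈ S, c₀ * Metric.infDist x B ≤ w₁ x) :
    ∃ ε₀ C : ℝ, 0 < ε₀ ∧ 0 < C ∧
      ∀ ε ∈ Set.Ioo (0:ℝ) ε₀, ∀ φ g : EuclideanSpace ℝ (Fin N) → ℝ,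
        ContDiffOn ℝ 2 φ S → ContinuousOn φ (closure S) → ContinuousOn g S →
        (∀ x ∈ S, - ε ^ 4 * lap φ x + (w₁ x) ^ 2 * φ x = g x) →
        (∀ x ∈ frontier S, φ x = 0) →
        ∀ Kg : ℝ, (∀ x ∈ S, |g x| ≤ Kg) →
          ∀ x ∈ S, |φ x| ≤ C * Kg / ε ^ 2 := by
  subst hS
  have hBf : B ⊆ frontier Ω₁ := by rw [hB]; exact inter_subset_right
  have hHopf' : ∀ x ∈ Ω₁, infDist x B < d₁ → c₀ * infDist x B ≤ w₁ x :=
    fun x hx h => hHopf x ⟨hx, h⟩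
  obtain ⟨E, hE, hEc, hE0, O, hO, hBO, hEO⟩ := globalA Ω₁ B hBcpt w₁
    (localA Ω₁ B hΩ₁ hBf hBcpt w₁ d₁ hd₁ c₀ hc₀ hw₁reg hw₁bc hHopf')
  obtain ⟨ρ, hρ, hρO⟩ := hBcpt.exists_thickening_subset_open hO hBO
  set S : Set (EuclideanSpace ℝ (Fin N)) := {x ∈ Ω₁ | Metric.infDist x B < d₁} with hSdef
  have hSo : IsOpen S := by
    have : S = Ω₁ ∩ {x | Metric.infDist x B < d₁} := rfl
    rw [this]
    exact hΩ₁.inter (isOpen_lt (continuous_infDist_pt B) continuous_const)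
  have hSsub : S ⊆ Ω₁ := fun x hx => hx.1
  have hSb : Bornology.IsBounded S := hbdd.subset (hSsub.trans hsub)
  have hwS : ContDiffOn ℝ 1 w₁ S := hw₁reg.mono (hSsub.trans subset_closure)
  obtain ⟨V, hV⟩ := hE.continuous.bounded_above_of_compact_support hEc
  have hEi : ∀ i : Fin N, ContDiff ℝ 1 (fun y => E y i) := fun i => contDiff_euclidean.1 hE i
  have hEis : ∀ i : Fin N, HasCompactSupport (fun y => E y i) := by
    intro i
    apply hEc.mono
    intro x hx
    contrapose! hx
    simp at hx
    simp [hx]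
  have hdivc : ∀ i : Fin N, ∃ W : ℝ, ∀ x,
      ‖fderiv ℝ (fun y => E y i) x (EuclideanSpace.single i 1)‖ ≤ W := by
    intro i
    exact (((hEi i).continuous_fderiv (by norm_num)).clm_apply
      continuous_const).bounded_above_of_compact_support ((hEis i).fderiv_apply (𝕜 := ℝ) _)
  choose W hW using hdivc
  obtain ⟨C', hC', hcore⟩ := coreBC hSo w₁ hwS (fun x hx => (hw₁pos x hx.1).le) E hE (V^2)
    (∑ i, W i) (1/(c₀*ρ)^2) (by positivity)
    (Finset.sum_nonneg fun i _ => (norm_nonneg _).trans (hW i 0)) (by positivity)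
    (by
      intro x
      have : ∑ i, (E x i)^2 = ‖E x‖^2 := by
        rw [EuclideanSpace.norm_sq_eq]; simp
      rw [this]
      exact pow_le_pow_left₀ (norm_nonneg _) (hV x) 2)
    (by
      intro x
      refine (Finset.abs_sum_le_sum_abs _ _).trans (Finset.sum_le_sum fun i _ => hW i x))
    (by
      intro x hx
      have hsum : fderiv ℝ w₁ x (E x) =
          ∑ i, fderiv ℝ w₁ x (EuclideanSpace.single i 1) * E x i := by
        conv_lhs => rw [← (EuclideanSpace.basisFun (Fin N) ℝ).sum_repr (E x)]
        simp [mul_comm]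
      rw [← hsum]
      by_cases hxO : x ∈ O
      · have := hEO x hx.1 hxO
        have : 0 ≤ 1/(c₀*ρ)^2 * (w₁ x)^2 := by positivity
        linarith
      · have h1 : ρ ≤ infDist x B := by
          by_contra hlt
          push Not at hlt
          exact hxO (hρO ((mem_thickening_iff_infDist_lt hBne).2 hlt))
        have h2 : c₀ * ρ ≤ w₁ x := (mul_le_mul_of_nonneg_left h1 hc₀.le).trans (hHopf x hx)
        have h3 : (c₀*ρ)^2 ≤ (w₁ x)^2 := pow_le_pow_left₀ (by positivity) h2 2
        have h4 : 1 ≤ 1/(c₀*ρ)^2 * (w₁ x)^2 := by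
          rw [one_div, ← div_eq_inv_mul, le_div_iff₀ (by positivity)]
          linarith
        linarith [hE0 x hx.1])
  refine ⟨1, 3 * C', one_pos, by positivity, ?_⟩
  intro ε hε φ g hφ hφc _ heq hφ0 Kg hKg x hx
  have hKg0 : 0 ≤ Kg := (abs_nonneg _).trans (hKg x hx)
  have hlap : ∀ f : EuclideanSpace ℝ (Fin N) → ℝ, ContDiffOn ℝ 2 f S → ∀ y ∈ S, lap f y =
      ∑ i, fderiv ℝ (fun y => fderiv ℝ f y (EuclideanSpace.single i 1)) y
        (EuclideanSpace.single i 1) := by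
    intro f hf y hy
    unfold lap
    refine Finset.sum_congr rfl fun i _ => ?_
    rw [iteratedFDeriv_two_apply]
    have h1 : ContDiffAt ℝ 1 (fderiv ℝ f) y :=
      ((hf y hy).contDiffAt (hSo.mem_nhds hy)).fderiv_right (by norm_num)
    have h2 := (h1.differentiableAt (by norm_num)).hasFDerivAt.clm_apply
      (hasFDerivAt_const (EuclideanSpace.single i (1:ℝ)) y)
    rw [h2.fderiv]
    simp
  have hup := upperD hSo hSb w₁ C' hcore hC' ε Kg hε.1 hε.2.le hKg0 φ hφ hφc hφ0 (by
    intro y hy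
    rw [← hlap φ hφ y hy]
    have := heq y hy
    have := (abs_le.1 (hKg y hy)).2
    linarith) x hx
  have hdn := upperD hSo hSb w₁ C' hcore hC' ε Kg hε.1 hε.2.le hKg0 (fun y => -φ y) hφ.neg hφc.neg
    (fun y hy => by simp [hφ0 y hy]) (by
    intro y hy
    have e : ∀ i : Fin N, fderiv ℝ (fun y => fderiv ℝ (fun y => -φ y) y (EuclideanSpace.single i 1)) y
        (EuclideanSpace.single i 1) = - fderiv ℝ (fun y => fderiv ℝ φ y (EuclideanSpace.single i 1)) y
        (EuclideanSpace.single i 1) := by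
      intro i
      simp [fderiv_fun_neg]
    simp only [e, Finset.sum_neg_distrib]
    rw [← hlap φ hφ y hy]
    have := heq y hy
    have := (abs_le.1 (hKg y hy)).1
    linarith) x hx
  exact abs_le.2 ⟨by linarith, hup⟩
end
end

section
/- There exist positive constants ε₀ and C such that if ε ∈ (0,ε₀), φ ∈ C²(S) ∩ C(S̄) and g ∈ C(S) satisfy -ε⁴Δφ + w₁²φ = dist²(x, ∂S ∩ ∂Ω)·g in S and φ = 0 on ∂S, then ‖φ‖_{L∞(S)} ≤ C ‖g‖_{L∞(S)}. -/
open Metric Set Filter Topology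

noncomputable section

theorem aux_second {N : ℕ} (f : EuclideanSpace ℝ (Fin N) → ℝ) (x e : EuclideanSpace ℝ (Fin N))
    (hf : ContDiffAt ℝ 2 f x) (hm : IsLocalMax f x) :
    iteratedFDeriv ℝ 2 f x (fun _ => e) ≤ 0 := by
  rw [iteratedFDeriv_two_apply]
  by_contra hpos
  push Not at hpos
  have hline : ∀ t : ℝ, HasDerivAt (fun t : ℝ => x + t • e) e t := by
    intro t
    simpa using ((hasDerivAt_id t).smul_const e).const_add x
  have hcont : Tendsto (fun t : ℝ => x + t • e) (𝓝 0) (𝓝 x) := by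
    have := (hline 0).continuousAt.tendsto
    simpa using this
  have hev : ∀ᶠ y in 𝓝 x, ContDiffAt ℝ 2 f y := hf.eventually (by simp)
  have hd1 : ∀ᶠ t : ℝ in 𝓝 0, deriv (fun t : ℝ => f (x + t • e)) t = fderiv ℝ f (x + t • e) e := by
    filter_upwards [hcont.eventually hev] with t ht
    have h1 : HasFDerivAt f (fderiv ℝ f (x + t • e)) (x + t • e) :=
      (ht.differentiableAt (by norm_num)).hasFDerivAt
    exact (h1.comp_hasDerivAt t (hline t)).deriv
  have hd2 : deriv (deriv (fun t : ℝ => f (x + t • e))) 0 = fderiv ℝ (fderiv ℝ f) x e e := by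
    rw [Filter.EventuallyEq.deriv_eq hd1]
    have h2 : DifferentiableAt ℝ (fderiv ℝ f) x :=
      (hf.fderiv_right (m := 1) (by norm_num)).differentiableAt (by norm_num)
    have h3 : HasFDerivAt (fderiv ℝ f) (fderiv ℝ (fderiv ℝ f) x) (x + (0:ℝ) • e) := by
      simpa using h2.hasFDerivAt
    have h4 := h3.comp_hasDerivAt (0:ℝ) (hline 0)
    have h5 := h4.clm_apply (hasDerivAt_const (0:ℝ) e)
    simpa using h5.deriv
  have hmax : IsLocalMax (fun t : ℝ => f (x + t • e)) 0 := by
    have := hcont.eventually hm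
    simpa [IsLocalMax, IsMaxFilter] using this
  have hc : ContinuousAt (fun t : ℝ => f (x + t • e)) 0 := by
    have h0 : ContinuousAt f (x + (0:ℝ) • e) := by simpa using hf.continuousAt
    exact ContinuousAt.comp (f := fun t : ℝ => x + t • e) h0 (hline 0).continuousAt
  have hmin : IsLocalMin (fun t : ℝ => f (x + t • e)) 0 :=
    isLocalMin_of_deriv_deriv_pos (by rw [hd2]; exact hpos) hmax.deriv_eq_zero hc
  have hconst : (fun t : ℝ => f (x + t • e)) =ᶠ[𝓝 0] fun _ => f (x + (0:ℝ) • e) := by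
    filter_upwards [hmin, hmax] with t h1 h2
    exact le_antisymm h2 h1
  have hz : deriv (deriv (fun t : ℝ => f (x + t • e))) 0 = 0 := by
    rw [hconst.deriv.deriv_eq]
    simp
  rw [hd2] at hz
  exact hpos.ne' hz

theorem aux_bound {N : ℕ} (S : Set (EuclideanSpace ℝ (Fin N))) (hSo : IsOpen S)
    (hSb : Bornology.IsBounded S) (w d φ g : EuclideanSpace ℝ (Fin N) → ℝ) (c ε K : ℝ)
    (hc : 0 < c) (hd : ∀ x ∈ S, 0 < d x) (hw : ∀ x ∈ S, c * d x ≤ w x)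
    (hφ : ContDiffOn ℝ 2 φ S) (hφc : ContinuousOn φ (closure S))
    (heq : ∀ x ∈ S, - ε ^ 4 * lap φ x + (w x) ^ 2 * φ x = (d x) ^ 2 * g x)
    (hbc : ∀ x ∈ frontier S, φ x = 0) (hg : ∀ x ∈ S, |g x| ≤ K) :
    ∀ x ∈ S, φ x ≤ (1 / c ^ 2) * K := by
  intro x hx
  have hK : 0 ≤ K := (abs_nonneg _).trans (hg x hx)
  have hKc : 0 ≤ (1 / c ^ 2) * K := by positivity
  obtain ⟨z, hz, hzmax⟩ := hSb.isCompact_closure.exists_isMaxOn ⟨x, subset_closure hx⟩ hφc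
  have hxz : φ x ≤ φ z := hzmax (subset_closure hx)
  refine hxz.trans ?_
  by_cases hzS : z ∈ S
  · by_contra hlt
    push Not at hlt
    have hpos : 0 < φ z := hKc.trans_lt hlt
    have hnh : S ∈ 𝓝 z := hSo.mem_nhds hzS
    have hloc : IsLocalMax φ z := by
      filter_upwards [hnh] with y hy using hzmax (subset_closure hy)
    have hlap : lap φ z ≤ 0 :=
      Finset.sum_nonpos fun i _ => aux_second φ z _ (hφ.contDiffAt hnh) hloc
    have h1 := heq z hzS
    have h2 := le_of_abs_le (hg z hzS)
    have h3 := hd z hzS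
    have h4 := hw z hzS
    have h5 : 0 ≤ - ε ^ 4 * lap φ z := by
      have : 0 ≤ ε ^ 4 * (- lap φ z) := mul_nonneg (by positivity) (by linarith)
      linarith
    have h6 : (c * d z) ^ 2 ≤ (w z) ^ 2 := by gcongr
    have h7 : (c * d z) ^ 2 * φ z ≤ (w z) ^ 2 * φ z := by gcongr
    have h8 : (d z) ^ 2 * g z ≤ (d z) ^ 2 * K := by gcongr
    have h9 : K < c ^ 2 * φ z := by
      rw [one_div, inv_mul_lt_iff₀ (by positivity)] at hlt
      exact hlt
    have h10 : (d z) ^ 2 * K < (d z) ^ 2 * (c ^ 2 * φ z) := by gcongr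
    nlinarith
  · rw [hbc z (by rw [hSo.frontier_eq]; exact ⟨hz, hzS⟩)]
    exact hKc

/-- **Lemma A.1, second assertion.** A-priori estimate
`‖φ‖_{L∞(S)} ≤ C ‖g‖_{L∞(S)}` for `-ε⁴Δφ + w₁²φ = dist²(x,∂S ∩ ∂Ω) g`
on the boundary strip `S`. -/
theorem statement_18 {N : ℕ}
    (Ω Ω₁ : Set (EuclideanSpace ℝ (Fin N)))
    (hΩ : IsOpen Ω) (hbdd : Bornology.IsBounded Ω)
    (hΩ₁ : IsOpen Ω₁) (hsub : Ω₁ ⊆ Ω)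
    (B : Set (EuclideanSpace ℝ (Fin N)))
    (hB : B = frontier Ω ∩ frontier Ω₁) (hBne : B.Nonempty) (hBcpt : IsCompact B)
    (w₁ : EuclideanSpace ℝ (Fin N) → ℝ)
    (hw₁reg : ContDiffOn ℝ 1 w₁ (closure Ω₁))
    (hw₁pos : ∀ x ∈ Ω₁, 0 < w₁ x)
    (hw₁bc : ∀ x ∈ B, w₁ x = 0)
    (d₁ : ℝ) (hd₁ : 0 < d₁)
    (S : Set (EuclideanSpace ℝ (Fin N)))
    (hS : S = {x ∈ Ω₁ | Metric.infDist x B < d₁})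
    -- `d₁` is small enough that the nearest point projection onto `B` is a
    -- well-defined smooth map on `S`
    (proj : EuclideanSpace ℝ (Fin N) → EuclideanSpace ℝ (Fin N))
    (hproj : ∀ x ∈ S, proj x ∈ B ∧ dist x (proj x) = Metric.infDist x B)
    (hprojC : ContDiffOn ℝ (⊤ : ℕ∞) proj S)
    (c₀ : ℝ) (hc₀ : 0 < c₀)
    (hHopf : ∀ x ∈ S, c₀ * Metric.infDist x B ≤ w₁ x) :
    ∃ ε₀ C : ℝ, 0 < ε₀ ∧ 0 < C ∧
      ∀ ε ∈ Set.Ioo (0:ℝ) ε₀, ∀ φ g : EuclideanSpace ℝ (Fin N) → ℝ,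
        ContDiffOn ℝ 2 φ S → ContinuousOn φ (closure S) → ContinuousOn g S →
        (∀ x ∈ S, - ε ^ 4 * lap φ x + (w₁ x) ^ 2 * φ x = (Metric.infDist x B) ^ 2 * g x) →
        (∀ x ∈ frontier S, φ x = 0) →
        ∀ Kg : ℝ, (∀ x ∈ S, |g x| ≤ Kg) →
          ∀ x ∈ S, |φ x| ≤ C * Kg := by
  have hSo : IsOpen S := by
    rw [hS]
    exact hΩ₁.inter (isOpen_lt (Metric.continuous_infDist_pt B) continuous_const)
  have hSΩ : S ⊆ Ω := by
    rw [hS]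
    exact fun x hx => hsub hx.1
  have hd : ∀ x ∈ S, 0 < Metric.infDist x B := by
    intro x hx
    refine (hBcpt.isClosed.notMem_iff_infDist_pos hBne).1 ?_
    intro hxB
    rw [hB, hΩ.frontier_eq] at hxB
    exact hxB.1.2 (hSΩ hx)
  refine ⟨1, 1 / c₀ ^ 2, one_pos, by positivity, ?_⟩
  intro ε _ φ g hφ hφc _ heq hbc K hK x hx
  have h1 := aux_bound S hSo (hbdd.subset hSΩ) w₁ (fun x => Metric.infDist x B) φ g c₀ ε K hc₀ hd
    hHopf hφ hφc heq hbc hK x hx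
  have hlapneg : ∀ y, lap (fun y => - φ y) y = - lap φ y := by
    intro y
    have : (fun y => - φ y) = -φ := rfl
    simp [lap, this, iteratedFDeriv_neg_apply]
  have h2 := aux_bound S hSo (hbdd.subset hSΩ) w₁ (fun x => Metric.infDist x B) (fun y => - φ y)
    (fun y => - g y) c₀ ε K hc₀ hd hHopf hφ.neg hφc.neg
    (fun y hy => by rw [hlapneg]; have := heq y hy; linarith)
    (fun y hy => by simp [hbc y hy]) (fun y hy => by simpa using hK y hy) x hx
  exact abs_le.2 ⟨by linarith, h1⟩
end
end
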